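/- arXiv:2402.02459 — 5 statements merged into one kernel-verified Lean document; each statement's English description precedes it below -/
import Mathlib

section
/- For every Σ ∈ S^p and every τ > 0, the function F(L,D) = τ‖L‖_* + (1/2)‖Σ − (L+D)‖_F² is convex on the set {(L,D) : L ∈ S^p_+, D = pdiag(D)}, and it attains its minimum over this set at a unique point. -/
open Matrix MeasureTheory ProbabilityTheory BigOperators

/-- `pdiag M`: the matrix `M` with all off-diagonal entries set to zero. -/
def pdiag {p : ℕ} (M : Matrix (Fin p) (Fin p) ℝ) : Matrix (Fin p) (Fin p) ℝ :=
  Matrix.of fun i j => if i = j then M i j else 0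

/-- `poffdiag M = M - pdiag M`: the off-diagonal part of `M`. -/
def poffdiag {p : ℕ} (M : Matrix (Fin p) (Fin p) ℝ) : Matrix (Fin p) (Fin p) ℝ :=
  M - pdiag M

/-- Frobenius norm of a real matrix. -/
noncomputable def frobNorm {p q : ℕ} (M : Matrix (Fin p) (Fin q) ℝ) : ℝ :=
  Real.sqrt (∑ i, ∑ j, (M i j) ^ 2)

/-- The singular values of a real matrix (as the square roots of the eigenvalues of `Mᵀ M`,
in no particular order, with multiplicity, padded by zeros). -/
noncomputable def singVals {p q : ℕ} (M : Matrix (Fin p) (Fin q) ℝ) : Fin q → ℝ :=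
  fun i => Real.sqrt ((Matrix.posSemidef_conjTranspose_mul_self M).isHermitian.eigenvalues i)

/-- Nuclear norm: sum of the singular values. -/
noncomputable def nucNorm {p q : ℕ} (M : Matrix (Fin p) (Fin q) ℝ) : ℝ :=
  ∑ i, singVals M i

/-- Spectral (operator) norm: the largest singular value. -/
noncomputable def specNorm {p q : ℕ} (M : Matrix (Fin p) (Fin q) ℝ) : ℝ :=
  ⨆ i, singVals M i

/-- `(2,∞)`-norm: the maximal Euclidean norm of a row. -/
noncomputable def rowNorm {p r : ℕ} (U : Matrix (Fin p) (Fin r) ℝ) : ℝ :=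
  ⨆ i, Real.sqrt (∑ j, (U i j) ^ 2)

/-- `sinΘ` distance between two column-orthonormal matrices, measured in spectral norm:
`‖sinΘ(U, V)‖ = ‖U Uᵀ - V Vᵀ‖`. -/
noncomputable def sinTheta {p r : ℕ} (U V : Matrix (Fin p) (Fin r) ℝ) : ℝ :=
  specNorm (U * Uᵀ - V * Vᵀ)

/-- `eigDesc M k` : the `k`-th largest eigenvalue (1-indexed) of a symmetric matrix `M`. -/
noncomputable def eigDesc {p : ℕ} (M : Matrix (Fin p) (Fin p) ℝ) (k : ℕ) : ℝ :=
  if h : M.IsHermitian then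
    (((List.ofFn h.eigenvalues).insertionSort (· ≥ ·)).getD (k - 1) 0)
  else 0

/-- `svDesc M k` : the `k`-th largest singular value (1-indexed) of `M`. -/
noncomputable def svDesc {p q : ℕ} (M : Matrix (Fin p) (Fin q) ℝ) (k : ℕ) : ℝ :=
  (((List.ofFn (singVals M)).insertionSort (· ≥ ·)).getD (k - 1) 0)

/-- Eigenvalue soft-thresholding operator `D_τ⁺`: for a symmetric matrix
`M = Σᵢ λᵢ uᵢ uᵢᵀ`, `D_τ⁺(M) = Σᵢ max (λᵢ - τ) 0 • uᵢ uᵢᵀ` (junk value `0` otherwise). -/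
noncomputable def softThresh {p : ℕ} (τ : ℝ) (M : Matrix (Fin p) (Fin p) ℝ) :
    Matrix (Fin p) (Fin p) ℝ :=
  if h : M.IsHermitian then
    (h.eigenvectorUnitary : Matrix (Fin p) (Fin p) ℝ) *
      Matrix.diagonal (fun i => max (h.eigenvalues i - τ) 0) *
      (star (h.eigenvectorUnitary : Matrix (Fin p) (Fin p) ℝ))
  else 0

/-- The `p × r` matrix whose columns are (orthonormal) eigenvectors of the symmetric matrix
`M` corresponding to its `r` largest eigenvalues ("first `r` eigenvectors"). -/
noncomputable def topEigenvectors {p : ℕ} (M : Matrix (Fin p) (Fin p) ℝ) (r : ℕ) :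
    Matrix (Fin p) (Fin r) ℝ :=
  if h : M.IsHermitian then
    Matrix.of fun i (j : Fin r) =>
      if hj : (j : ℕ) < p then
        (h.eigenvectorUnitary : Matrix (Fin p) (Fin p) ℝ) i
          ((Tuple.sort h.eigenvalues) (Fin.rev ⟨(j : ℕ), hj⟩))
      else 0
  else 0

/-- The objective function `F(L, D) = τ ‖L‖_* + (1/2) ‖Σ - (L + D)‖_F²`. -/
noncomputable def objF {p : ℕ} (τ : ℝ) (S L D : Matrix (Fin p) (Fin p) ℝ) : ℝ :=
  τ * nucNorm L + (1 / 2) * (frobNorm (S - (L + D))) ^ 2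

/-- `(L, D)` is a global minimizer of the relaxed-MTFA objective `F` over
`L ∈ S^p₊` and diagonal `D`. -/
def IsRMTFAMin {p : ℕ} (τ : ℝ) (S L D : Matrix (Fin p) (Fin p) ℝ) : Prop :=
  L.PosSemidef ∧ D = pdiag D ∧
    ∀ L' D' : Matrix (Fin p) (Fin p) ℝ, L'.PosSemidef → D' = pdiag D' →
      objF τ S L D ≤ objF τ S L' D'

lemma nucNorm_psd {p : ℕ} {L : Matrix (Fin p) (Fin p) ℝ} (hL : L.PosSemidef) :
    nucNorm L = L.trace := by
  have hA := (Matrix.posSemidef_conjTranspose_mul_self L).isHermitian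
  have h1 : (hA.cfc Real.sqrt).trace = nucNorm L := by
    unfold Matrix.IsHermitian.cfc
    rw [Unitary.conjStarAlgAut_apply, Matrix.trace_mul_cycle]
    simp [nucNorm, singVals, Matrix.trace_diagonal]
  have h2 : cfc Real.sqrt (Lᴴ * L) = L := by
    have e : Lᴴ * L = L ^ 2 := by rw [hL.isHermitian.eq, sq]
    have hsa : IsSelfAdjoint L := hL.isHermitian
    rw [e, ← cfc_comp_pow Real.sqrt 2 L (by fun_prop) hsa]
    have : cfc (fun x : ℝ => Real.sqrt (x ^ 2)) L = cfc (id : ℝ → ℝ) L := by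
      apply cfc_congr
      intro x hx
      rw [hL.isHermitian.spectrum_real_eq_range_eigenvalues] at hx
      obtain ⟨i, rfl⟩ := hx
      exact Real.sqrt_sq (hL.eigenvalues_nonneg i)
    rw [this, cfc_id ℝ L hsa]
  rw [← h1, ← hA.cfc_eq, h2]

/-- smooth version of the objective -/
noncomputable def auxG {p : ℕ} (τ : ℝ) (S L D : Matrix (Fin p) (Fin p) ℝ) : ℝ :=
  τ * L.trace + (1 / 2) * ∑ i, ∑ j, (S i j - (L i j + D i j)) ^ 2

lemma objF_psd {p : ℕ} (τ : ℝ) (S D : Matrix (Fin p) (Fin p) ℝ) {L : Matrix (Fin p) (Fin p) ℝ}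
    (hL : L.PosSemidef) : objF τ S L D = auxG τ S L D := by
  unfold objF auxG frobNorm
  rw [nucNorm_psd hL, Real.sq_sqrt (by positivity)]
  simp

lemma psd_cauchy {p : ℕ} {L : Matrix (Fin p) (Fin p) ℝ} (hL : L.PosSemidef) (i : Fin p)
    (v : Fin p → ℝ) : ((L *ᵥ v) i) ^ 2 ≤ L i i * (v ⬝ᵥ L *ᵥ v) := by
  have hT : Lᵀ = L := by
    have := hL.isHermitian.eq
    rwa [Matrix.conjTranspose_eq_transpose_of_trivial] at this
  have key : ∀ t : ℝ, 0 ≤ L i i * (t * t) + (2 * (L *ᵥ v) i) * t + v ⬝ᵥ L *ᵥ v := by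
    intro t
    have h := hL.dotProduct_mulVec_nonneg (t • Pi.single i 1 + v)
    have h3 : v ⬝ᵥ L *ᵥ (Pi.single i 1) = (L *ᵥ v) i := by
      rw [Matrix.dotProduct_mulVec, ← Matrix.mulVec_transpose, hT]; simp
    rw [star_trivial, Matrix.mulVec_add, Matrix.mulVec_smul, add_dotProduct, dotProduct_add,
      dotProduct_add, dotProduct_smul, dotProduct_smul, smul_dotProduct, smul_dotProduct, h3] at h
    simp only [smul_eq_mul, single_dotProduct, one_mul] at h
    have h4 : (L *ᵥ (Pi.single i 1)) i = L i i := by simp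
    rw [h4] at h
    linarith
  have := discrim_le_zero key
  unfold discrim at this
  nlinarith

lemma psd_entry {p : ℕ} {L : Matrix (Fin p) (Fin p) ℝ} (hL : L.PosSemidef) (i j : Fin p) :
    |L i j| ≤ L.trace := by
  have hd : ∀ k, L k k ≤ L.trace := fun k =>
    Finset.single_le_sum (f := fun k => L k k) (fun k _ => hL.diag_nonneg) (Finset.mem_univ k)
  have h := psd_cauchy hL i (Pi.single j 1)
  simp only [Matrix.mulVec_single_one, single_dotProduct, one_mul, Matrix.col_apply] at h
  have h0 : 0 ≤ L i i := hL.diag_nonneg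
  have h1 : 0 ≤ L j j := hL.diag_nonneg
  have : |L i j| ^ 2 ≤ L.trace ^ 2 := by
    rw [sq_abs, sq L.trace]
    exact h.trans (mul_le_mul (hd i) (hd j) h1 (h0.trans (hd i)))
  exact abs_le_of_sq_le_sq' this (h0.trans (hd i)) |>.2

lemma psd_shrink {p : ℕ} {L M : Matrix (Fin p) (Fin p) ℝ} (hL : L.PosSemidef)
    (hM : M.PosSemidef) (i : Fin p) (hne : L i i ≠ M i i)
    (hrow : ∀ j, j ≠ i → L i j = M i j) :
    ∃ ε : ℝ, 0 < ε ∧ ((1 / 2 : ℝ) • L + (1 / 2 : ℝ) • M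
      - Matrix.diagonal (Pi.single i ε)).PosSemidef := by
  have h0 : 0 ≤ L i i := hL.diag_nonneg
  have h1 : 0 ≤ M i i := hM.diag_nonneg
  have hc : 0 < L i i + M i i := by
    rcases h0.lt_or_eq with h | h
    · linarith
    · rcases h1.lt_or_eq with h' | h'
      · linarith
      · exact absurd (h.symm.trans h') hne
  have hd : 0 < (L i i - M i i) ^ 2 := by
    have := sub_ne_zero.mpr hne
    positivity
  refine ⟨(L i i - M i i) ^ 2 / (4 * (L i i + M i i)), by positivity, ?_⟩
  set ε := (L i i - M i i) ^ 2 / (4 * (L i i + M i i)) with hε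
  refine .of_dotProduct_mulVec_nonneg ?_ ?_
  · refine Matrix.IsHermitian.sub (Matrix.IsHermitian.add ?_ ?_) ?_
    · exact (hL.smul (by norm_num : (0:ℝ) ≤ 1/2)).isHermitian
    · exact (hM.smul (by norm_num : (0:ℝ) ≤ 1/2)).isHermitian
    · exact Matrix.isHermitian_diagonal _
  · intro v
    rw [star_trivial]
    have e : v ⬝ᵥ ((1 / 2 : ℝ) • L + (1 / 2 : ℝ) • M - Matrix.diagonal (Pi.single i ε)) *ᵥ v
        = 1 / 2 * (v ⬝ᵥ L *ᵥ v) + 1 / 2 * (v ⬝ᵥ M *ᵥ v) - ε * v i ^ 2 := by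
      have : v ⬝ᵥ (Matrix.diagonal (Pi.single i ε)) *ᵥ v = ε * v i ^ 2 := by
        simp only [dotProduct, Matrix.mulVec_diagonal]
        rw [Finset.sum_eq_single i]
        · simp; ring
        · intro j _ hj; simp [hj]
        · simp
      rw [Matrix.sub_mulVec, Matrix.add_mulVec, Matrix.smul_mulVec, Matrix.smul_mulVec,
        dotProduct_sub, dotProduct_add, dotProduct_smul, dotProduct_smul, this]
      simp
    rw [e]
    have hl := psd_cauchy hL i v
    have hm := psd_cauchy hM i v
    have hlq := hL.dotProduct_mulVec_nonneg v
    have hmq := hM.dotProduct_mulVec_nonneg v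
    rw [star_trivial] at hlq hmq
    have hdiff : (L *ᵥ v) i - (M *ᵥ v) i = (L i i - M i i) * v i := by
      simp only [Matrix.mulVec, dotProduct]
      rw [← Finset.sum_sub_distrib, Finset.sum_eq_single i]
      · ring
      · intro j _ hj; rw [hrow j hj]; ring
      · simp
    generalize v ⬝ᵥ L *ᵥ v = a at *
    generalize v ⬝ᵥ M *ᵥ v = b at *
    generalize (L *ᵥ v) i = x at *
    generalize (M *ᵥ v) i = y at *
    have hb : ((L i i - M i i) * v i) ^ 2 ≤ 2 * (L i i + M i i) * (a + b) := by
      rw [← hdiff]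
      nlinarith [sq_nonneg (x + y), mul_nonneg h0 hmq, mul_nonneg h1 hlq]
    have : ε * v i ^ 2 ≤ 1 / 2 * (a + b) := by
      have e2 : ε * v i ^ 2 = ((L i i - M i i) * v i) ^ 2 / (4 * (L i i + M i i)) := by
        rw [hε]; ring
      rw [e2, div_le_iff₀ (by positivity)]
      linarith
    linarith

lemma pdiag_iff {p : ℕ} (D : Matrix (Fin p) (Fin p) ℝ) :
    D = pdiag D ↔ ∀ i j, i ≠ j → D i j = 0 := by
  constructor
  · intro h i j hij
    rw [h]; simp [pdiag, hij]
  · intro h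
    ext i j
    by_cases hij : i = j
    · simp [pdiag, hij]
    · simp [pdiag, hij, h i j hij]

lemma auxG_conv {p : ℕ} (τ : ℝ) (S L D L' D' : Matrix (Fin p) (Fin p) ℝ) (a b : ℝ)
    (hab : a + b = 1) :
    auxG τ S (a • L + b • L') (a • D + b • D') = a * auxG τ S L D + b * auxG τ S L' D'
      - (1 / 2) * (a * b) * ∑ i, ∑ j, ((L i j + D i j) - (L' i j + D' i j)) ^ 2 := by
  have hb : b = 1 - a := by linarith
  subst hb
  have : ∑ i, ∑ j, (S i j - ((a • L + (1 - a) • L') i j + (a • D + (1 - a) • D') i j)) ^ 2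
      = a * ∑ i, ∑ j, (S i j - (L i j + D i j)) ^ 2
        + (1 - a) * ∑ i, ∑ j, (S i j - (L' i j + D' i j)) ^ 2
        - (a * (1 - a)) * ∑ i, ∑ j, ((L i j + D i j) - (L' i j + D' i j)) ^ 2 := by
    simp only [Finset.mul_sum, ← Finset.sum_add_distrib, ← Finset.sum_sub_distrib]
    refine Finset.sum_congr rfl fun i _ => Finset.sum_congr rfl fun j _ => ?_
    simp only [Matrix.add_apply, Matrix.smul_apply, smul_eq_mul]
    ring
  unfold auxG
  rw [this, Matrix.trace_add, Matrix.trace_smul, Matrix.trace_smul]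
  simp only [smul_eq_mul]
  ring

lemma feas_convex {p : ℕ} : Convex ℝ
      {x : Matrix (Fin p) (Fin p) ℝ × Matrix (Fin p) (Fin p) ℝ |
        x.1.PosSemidef ∧ x.2 = pdiag x.2} := by
  rintro ⟨L, D⟩ ⟨hL, hD⟩ ⟨L', D'⟩ ⟨hL', hD'⟩ a b ha hb hab
  refine ⟨(hL.smul ha).add (hL'.smul hb), ?_⟩
  simp only [pdiag_iff] at hD hD' ⊢
  intro i j hij
  simp [hD i j hij, hD' i j hij]

lemma feas_closed {p : ℕ} : IsClosed
      {x : Matrix (Fin p) (Fin p) ℝ × Matrix (Fin p) (Fin p) ℝ |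
        x.1.PosSemidef ∧ x.2 = pdiag x.2} := by
  have e : {x : Matrix (Fin p) (Fin p) ℝ × Matrix (Fin p) (Fin p) ℝ |
        x.1.PosSemidef ∧ x.2 = pdiag x.2} =
      {x | x.1ᴴ = x.1} ∩ (⋂ v : Fin p → ℝ, {x | 0 ≤ star v ⬝ᵥ (x.1 *ᵥ v)}) ∩
        {x | x.2 = pdiag x.2} := by
    ext x
    simp [Matrix.posSemidef_iff_dotProduct_mulVec, Matrix.IsHermitian]
  rw [e]
  refine IsClosed.inter (IsClosed.inter ?_ ?_) ?_
  · exact isClosed_eq (by fun_prop) (by fun_prop)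
  · refine isClosed_iInter fun v => isClosed_le continuous_const ?_
    fun_prop
  · refine isClosed_eq (by fun_prop) ?_
    refine continuous_matrix fun i j => ?_
    by_cases h : i = j
    · simp only [pdiag, Matrix.of_apply, h, if_true]; fun_prop
    · simp only [pdiag, Matrix.of_apply, h, if_false]; fun_prop

lemma box_compact {p : ℕ} (R : ℝ) :
    IsCompact {M : Matrix (Fin p) (Fin p) ℝ | ∀ i j, |M i j| ≤ R} := by
  have h : IsCompact (Set.pi Set.univ (fun _ : Fin p => Set.pi Set.univ
      (fun _ : Fin p => Set.Icc (-R) R))) :=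
    isCompact_univ_pi fun _ => isCompact_univ_pi fun _ => isCompact_Icc
  have e : {M : Matrix (Fin p) (Fin p) ℝ | ∀ i j, |M i j| ≤ R} =
      (Set.pi Set.univ (fun _ : Fin p => Set.pi Set.univ
      (fun _ : Fin p => Set.Icc (-R) R)) : Set (Fin p → Fin p → ℝ)) := by
    apply Set.ext
    intro M
    exact ⟨fun hM i _ j _ => abs_le.mp (hM i j),
      fun hM i j => abs_le.mpr (hM i trivial j trivial)⟩
  rw [e]
  exact h

lemma auxG_exists {p : ℕ} (S : Matrix (Fin p) (Fin p) ℝ) (τ : ℝ) (hτ : 0 < τ) :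
    ∃ x : Matrix (Fin p) (Fin p) ℝ × Matrix (Fin p) (Fin p) ℝ,
      (x.1.PosSemidef ∧ x.2 = pdiag x.2) ∧
      ∀ L' D' : Matrix (Fin p) (Fin p) ℝ, L'.PosSemidef → D' = pdiag D' →
        auxG τ S x.1 x.2 ≤ auxG τ S L' D' := by
  set F0 := auxG τ S 0 0 with hF0
  have hF0n : 0 ≤ F0 := by
    rw [hF0]; unfold auxG
    simp only [Matrix.trace_zero, mul_zero, zero_add]; positivity
  set s := ∑ i, ∑ j, |S i j| with hs
  have hsn : 0 ≤ s := by positivity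
  have hS : ∀ i j, |S i j| ≤ s := fun i j =>
    (Finset.single_le_sum (f := fun j => |S i j|) (fun _ _ => abs_nonneg _)
      (Finset.mem_univ j)).trans
    (Finset.single_le_sum (f := fun i => ∑ j, |S i j|) (fun _ _ => by positivity)
      (Finset.mem_univ i))
  set R := s + F0 / τ + (2 * F0 + 1) with hR
  have hq : 0 ≤ F0 / τ := by positivity
  have hbd : ∀ L D : Matrix (Fin p) (Fin p) ℝ, L.PosSemidef → auxG τ S L D ≤ F0 →
      (∀ i j, |L i j| ≤ R) ∧ (∀ i j, |D i j| ≤ R) := by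
    intro L D hL h
    have htr : 0 ≤ L.trace := Finset.sum_nonneg fun i _ => hL.diag_nonneg
    have hsq : ∀ i j, (S i j - (L i j + D i j)) ^ 2
        ≤ ∑ i, ∑ j, (S i j - (L i j + D i j)) ^ 2 := fun i j =>
      (Finset.single_le_sum (f := fun j => (S i j - (L i j + D i j)) ^ 2)
        (fun _ _ => sq_nonneg _) (Finset.mem_univ j)).trans
      (Finset.single_le_sum (f := fun i => ∑ j, (S i j - (L i j + D i j)) ^ 2)
        (fun _ _ => by positivity) (Finset.mem_univ i))
    have hsum : 0 ≤ ∑ i, ∑ j, (S i j - (L i j + D i j)) ^ 2 := by positivity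
    unfold auxG at h
    have htt : 0 ≤ τ * L.trace := by positivity
    have ht : L.trace ≤ F0 / τ := by
      rw [le_div_iff₀ hτ]; linarith
    have hLe : ∀ i j, |L i j| ≤ F0 / τ := fun i j => (psd_entry hL i j).trans ht
    refine ⟨fun i j => (hLe i j).trans (by linarith), fun i j => ?_⟩
    have h1 := abs_le.mp (hS i j)
    have h2 := abs_le.mp (hLe i j)
    have h3 : |S i j - (L i j + D i j)| ≤ 2 * F0 + 1 := by
      have := hsq i j
      apply abs_le_of_sq_le_sq _ (by linarith)
      nlinarith
    have h3' := abs_le.mp h3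
    rw [abs_le]
    constructor <;> linarith [h3'.1, h3'.2, h1.1, h1.2, h2.1, h2.2]
  have hK : IsCompact ({x : Matrix (Fin p) (Fin p) ℝ × Matrix (Fin p) (Fin p) ℝ |
        x.1.PosSemidef ∧ x.2 = pdiag x.2} ∩
      ({M : Matrix (Fin p) (Fin p) ℝ | ∀ i j, |M i j| ≤ R} ×ˢ
        {M : Matrix (Fin p) (Fin p) ℝ | ∀ i j, |M i j| ≤ R})) :=
    ((box_compact R).prod (box_compact R)).inter_left feas_closed
  have hcont : Continuous (fun x : Matrix (Fin p) (Fin p) ℝ × Matrix (Fin p) (Fin p) ℝ =>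
      auxG τ S x.1 x.2) := by
    unfold auxG
    have ht : Continuous (fun x : Matrix (Fin p) (Fin p) ℝ × Matrix (Fin p) (Fin p) ℝ =>
      x.1.trace) := continuous_fst.matrix_trace
    fun_prop
  have hz : (0 : Matrix (Fin p) (Fin p) ℝ) = pdiag 0 := by
    rw [pdiag_iff]; simp
  have h0 := hbd 0 0 Matrix.PosSemidef.zero le_rfl
  obtain ⟨x, hx, hmin⟩ := hK.exists_isMinOn ⟨(0, 0), ⟨Matrix.PosSemidef.zero, hz⟩, h0.1, h0.2⟩
    hcont.continuousOn
  refine ⟨x, hx.1, fun L' D' hL' hD' => ?_⟩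
  by_cases hle : auxG τ S L' D' ≤ F0
  · have hb := hbd L' D' hL' hle
    exact hmin (a := (L', D')) ⟨⟨hL', hD'⟩, hb.1, hb.2⟩
  · have := hmin (a := (0, 0)) ⟨⟨Matrix.PosSemidef.zero, hz⟩, h0.1, h0.2⟩
    exact le_trans this (not_le.mp hle).le

lemma auxG_unique {p : ℕ} (S : Matrix (Fin p) (Fin p) ℝ) (τ : ℝ) (hτ : 0 < τ)
    (L D L' D' : Matrix (Fin p) (Fin p) ℝ) (hL : L.PosSemidef) (hD : D = pdiag D)
    (hL' : L'.PosSemidef) (hD' : D' = pdiag D')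
    (h : ∀ M E : Matrix (Fin p) (Fin p) ℝ, M.PosSemidef → E = pdiag E →
      auxG τ S L D ≤ auxG τ S M E)
    (h' : ∀ M E : Matrix (Fin p) (Fin p) ℝ, M.PosSemidef → E = pdiag E →
      auxG τ S L' D' ≤ auxG τ S M E) : L = L' ∧ D = D' := by
  have heq : auxG τ S L D = auxG τ S L' D' := le_antisymm (h _ _ hL' hD') (h' _ _ hL hD)
  have hc := auxG_conv τ S L D L' D' (1 / 2) (1 / 2) (by norm_num)
  have hf := feas_convex (p := p) (x := (L, D)) ⟨hL, hD⟩ (y := (L', D')) ⟨hL', hD'⟩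
    (by norm_num : (0:ℝ) ≤ 1 / 2) (by norm_num : (0:ℝ) ≤ 1 / 2) (by norm_num)
  have hm := h _ _ hf.1 hf.2
  simp only [Prod.smul_mk, Prod.mk_add_mk] at hm hf
  have hz : ∑ i, ∑ j, ((L i j + D i j) - (L' i j + D' i j)) ^ 2 = 0 := by
    apply le_antisymm
    · linarith
    · positivity
  have hzz : ∀ i j, L i j + D i j = L' i j + D' i j := by
    intro i j
    rw [Finset.sum_eq_zero_iff_of_nonneg (fun _ _ => by positivity)] at hz
    have h2 := hz i (Finset.mem_univ i)
    rw [Finset.sum_eq_zero_iff_of_nonneg (fun _ _ => by positivity)] at h2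
    have h3 := h2 j (Finset.mem_univ j)
    exact sub_eq_zero.mp (pow_eq_zero_iff (two_ne_zero) |>.mp h3)
  rw [hz] at hc
  have hDo := (pdiag_iff D).mp hD
  have hDo' := (pdiag_iff D').mp hD'
  have hoff : ∀ i j, i ≠ j → L i j = L' i j := by
    intro i j hij
    have := hzz i j
    rw [hDo i j hij, hDo' i j hij] at this
    linarith
  have hdiag : ∀ i, L i i = L' i i := by
    intro i
    by_contra hne
    obtain ⟨ε, hε, hpsd⟩ := psd_shrink hL hL' i hne (fun j hj => hoff i j hj.symm)
    have hb := h _ ((1 / 2 : ℝ) • D + (1 / 2 : ℝ) • D' + Matrix.diagonal (Pi.single i ε)) hpsd (by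
      rw [pdiag_iff]
      intro a b hab
      simp [hDo a b hab, hDo' a b hab, hab])
    have e : auxG τ S ((1 / 2 : ℝ) • L + (1 / 2 : ℝ) • L' - Matrix.diagonal (Pi.single i ε))
        ((1 / 2 : ℝ) • D + (1 / 2 : ℝ) • D' + Matrix.diagonal (Pi.single i ε)) =
        auxG τ S ((1 / 2 : ℝ) • L + (1 / 2 : ℝ) • L') ((1 / 2 : ℝ) • D + (1 / 2 : ℝ) • D')
          - τ * ε := by
      have ht : (Matrix.diagonal (Pi.single i ε : Fin p → ℝ)).trace = ε := by
        rw [Matrix.trace_diagonal]; simp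
      unfold auxG
      rw [Matrix.trace_sub, ht]
      have : ∀ (A B E : Matrix (Fin p) (Fin p) ℝ) (a b : Fin p),
          (A - E) a b + (B + E) a b = A a b + B a b := by
        intro A B E a b; simp
      simp only [this]
      ring
    rw [e, hc] at hb
    have : 0 < τ * ε := by positivity
    linarith
  have hLL : L = L' := by
    ext i j
    by_cases hij : i = j
    · subst hij; exact hdiag i
    · exact hoff i j hij
  refine ⟨hLL, ?_⟩
  ext i j
  have := hzz i j
  rw [hLL] at this
  linarith

/-- For every `Σ ∈ S^p` and `τ > 0`, the objective
`F(L, D) = τ‖L‖_* + (1/2)‖Σ − (L+D)‖_F²` is convex on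
`{(L, D) : L ∈ S^p₊, D = pdiag D}` and attains its minimum there at a unique point. -/
theorem rmtfa_convex_and_unique_min (p : ℕ) (S : Matrix (Fin p) (Fin p) ℝ)
    (hS : S.IsHermitian) (τ : ℝ) (hτ : 0 < τ) :
    ConvexOn ℝ
      {x : Matrix (Fin p) (Fin p) ℝ × Matrix (Fin p) (Fin p) ℝ |
        x.1.PosSemidef ∧ x.2 = pdiag x.2}
      (fun x => objF τ S x.1 x.2) ∧
    ∃! x : Matrix (Fin p) (Fin p) ℝ × Matrix (Fin p) (Fin p) ℝ,
      IsRMTFAMin τ S x.1 x.2 := by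
  refine ⟨⟨feas_convex, ?_⟩, ?_⟩
  · rintro x hx y hy a b ha hb hab
    have hz := feas_convex hx hy ha hb hab
    simp only
    rw [objF_psd τ S _ hz.1, objF_psd τ S _ hx.1, objF_psd τ S _ hy.1]
    simp only [Prod.fst_add, Prod.snd_add, Prod.smul_fst, Prod.smul_snd, smul_eq_mul]
    rw [auxG_conv τ S _ _ _ _ a b hab]
    have : 0 ≤ (1 / 2) * (a * b) *
        ∑ i, ∑ j, ((x.1 i j + x.2 i j) - (y.1 i j + y.2 i j)) ^ 2 := by positivity
    linarith
  · have hiff : ∀ L D : Matrix (Fin p) (Fin p) ℝ, IsRMTFAMin τ S L D ↔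
        L.PosSemidef ∧ D = pdiag D ∧ ∀ M E : Matrix (Fin p) (Fin p) ℝ, M.PosSemidef →
          E = pdiag E → auxG τ S L D ≤ auxG τ S M E := by
      intro L D
      unfold IsRMTFAMin
      refine and_congr_right fun hL => and_congr_right fun hD => ?_
      refine forall_congr' fun M => forall_congr' fun E => forall_congr' fun hM => ?_
      rw [objF_psd τ S _ hL, objF_psd τ S _ hM]
    obtain ⟨x, hx, hmin⟩ := auxG_exists S τ hτ
    refine ⟨x, (hiff _ _).mpr ⟨hx.1, hx.2, hmin⟩, fun y hy => ?_⟩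
    obtain ⟨hy1, hy2, hy3⟩ := (hiff _ _).mp hy
    obtain ⟨e1, e2⟩ := auxG_unique S τ hτ y.1 y.2 x.1 x.2 hy1 hy2 hx.1 hx.2 hy3 hmin
    exact Prod.ext e1 e2
end

section
/- Let Σ ∈ S^p have strictly positive diagonal entries, and for τ > 0 let (L̂(τ), D̂(τ)) be the unique minimizer of F(L,D) = τ‖L‖_* + (1/2)‖Σ − (L+D)‖_F² over L ∈ S^p_+ and diagonal D. Then there exists τ₀ > 0 such that for all τ ≥ τ₀, every diagonal entry [D̂(τ)]ᵢᵢ is strictly positive. -/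
open Matrix MeasureTheory ProbabilityTheory BigOperators

lemma sum_eig_eq {p : ℕ} (M : Matrix (Fin p) (Fin p) ℝ) :
    ∑ i, (singVals M i) ^ 2 = ∑ i, ∑ j, (M i j) ^ 2 := by
  have h := (Matrix.posSemidef_conjTranspose_mul_self M).isHermitian.trace_eq_sum_eigenvalues
  have h1 : ∀ i, (singVals M i) ^ 2 =
      (Matrix.posSemidef_conjTranspose_mul_self M).isHermitian.eigenvalues i := by
    intro i
    exact Real.sq_sqrt ((Matrix.posSemidef_conjTranspose_mul_self M).eigenvalues_nonneg i)
  simp only [h1]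
  have h2 : (Mᴴ * M).trace = ∑ i, ∑ j, (M i j) ^ 2 := by
    rw [Finset.sum_comm]
    simp [Matrix.trace, Matrix.mul_apply, sq]
  rw [← h2, h]
  simp

lemma singVals_nonneg' {p : ℕ} (M : Matrix (Fin p) (Fin p) ℝ) (i : Fin p) :
    0 ≤ singVals M i := Real.sqrt_nonneg _

lemma nucNorm_zero' {p : ℕ} : nucNorm (0 : Matrix (Fin p) (Fin p) ℝ) = 0 := by
  have h := sum_eig_eq (0 : Matrix (Fin p) (Fin p) ℝ)
  simp only [Matrix.zero_apply, ne_eq, OfNat.ofNat_ne_zero, not_false_eq_true, zero_pow,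
    Finset.sum_const_zero] at h
  rw [Finset.sum_eq_zero_iff_of_nonneg (fun i _ => sq_nonneg _)] at h
  exact Finset.sum_eq_zero fun i hi => pow_eq_zero_iff (two_ne_zero) |>.1 (h i hi)

lemma nucNorm_nonneg' {p : ℕ} (M : Matrix (Fin p) (Fin p) ℝ) : 0 ≤ nucNorm M :=
  Finset.sum_nonneg fun i _ => singVals_nonneg' M i

lemma entry_le_nucNorm {p : ℕ} (M : Matrix (Fin p) (Fin p) ℝ) (i : Fin p) :
    M i i ≤ nucNorm M := by
  apply le_of_sq_le_sq _ (nucNorm_nonneg' M)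
  calc (M i i) ^ 2 ≤ ∑ j, (M i j) ^ 2 :=
        Finset.single_le_sum (f := fun j => (M i j) ^ 2) (fun j _ => sq_nonneg _)
          (Finset.mem_univ i)
    _ ≤ ∑ i, ∑ j, (M i j) ^ 2 :=
        Finset.single_le_sum (f := fun i => ∑ j, (M i j) ^ 2)
          (fun j _ => Finset.sum_nonneg fun _ _ => sq_nonneg _) (Finset.mem_univ i)
    _ = ∑ i, (singVals M i) ^ 2 := (sum_eig_eq M).symm
    _ ≤ (nucNorm M) ^ 2 := Finset.sum_sq_le_sq_sum_of_nonneg fun i _ => singVals_nonneg' M i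

lemma frob_sq {p : ℕ} (M : Matrix (Fin p) (Fin p) ℝ) :
    frobNorm M ^ 2 = ∑ i, ∑ j, (M i j) ^ 2 :=
  Real.sq_sqrt (Finset.sum_nonneg fun _ _ => Finset.sum_nonneg fun _ _ => sq_nonneg _)

lemma pdiag_idem {p : ℕ} (M : Matrix (Fin p) (Fin p) ℝ) : pdiag M = pdiag (pdiag M) := by
  ext i j
  by_cases h : i = j <;> simp [pdiag, h]

lemma D_eq {p : ℕ} {τ : ℝ} {S L D : Matrix (Fin p) (Fin p) ℝ} (h : IsRMTFAMin τ S L D)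
    (i : Fin p) : D i i = S i i - L i i := by
  obtain ⟨hL, hD, hm⟩ := h
  have h1 := hm L (pdiag (S - L)) hL (pdiag_idem _)
  simp only [objF, frob_sq] at h1
  have hoff : ∀ a b, a ≠ b → D a b = 0 := by
    intro a b hab
    rw [hD]; simp [pdiag, hab]
  have hle : ∀ a b, ((S - (L + pdiag (S - L))) a b) ^ 2 ≤ ((S - (L + D)) a b) ^ 2 := by
    intro a b
    by_cases hab : a = b
    · subst hab
      simp only [pdiag, Matrix.sub_apply, Matrix.add_apply, Matrix.of_apply, if_true]
      have : S a a - (L a a + (S a a - L a a)) = 0 := by ring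
      rw [this, zero_pow two_ne_zero]; positivity
    · simp [pdiag, hab, hoff a b hab]
  by_contra hne
  have hlt : ((S - (L + pdiag (S - L))) i i) ^ 2 < ((S - (L + D)) i i) ^ 2 := by
    simp only [pdiag, Matrix.sub_apply, Matrix.add_apply, Matrix.of_apply, if_true]
    have : S i i - (L i i + (S i i - L i i)) = 0 := by ring
    rw [this, zero_pow two_ne_zero]
    have h0 : S i i - (L i i + D i i) ≠ 0 := fun h => hne (by linarith)
    positivity
  have : ∑ a, ∑ b, ((S - (L + pdiag (S - L))) a b) ^ 2 <
      ∑ a, ∑ b, ((S - (L + D)) a b) ^ 2 := by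
    apply Finset.sum_lt_sum
    · exact fun a _ => Finset.sum_le_sum fun b _ => hle a b
    · exact ⟨i, Finset.mem_univ i, Finset.sum_lt_sum (fun b _ => hle i b)
        ⟨i, Finset.mem_univ i, hlt⟩⟩
  linarith

/-- no Heywood cases for large `τ`: if `Σ ∈ S^p` has strictly positive
diagonal entries, then for all sufficiently large `τ` every diagonal entry of the
relaxed-MTFA solution `D̂(τ)` is strictly positive. -/
theorem rmtfa_no_heywood (p : ℕ) (S : Matrix (Fin p) (Fin p) ℝ) (hS : S.IsHermitian)
    (hdiag : ∀ i, 0 < S i i)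
    (Lhat Dhat : ℝ → Matrix (Fin p) (Fin p) ℝ)
    (hmin : ∀ τ : ℝ, 0 < τ → IsRMTFAMin τ S (Lhat τ) (Dhat τ)) :
    ∃ τ₀ : ℝ, 0 < τ₀ ∧ ∀ τ : ℝ, τ₀ ≤ τ → ∀ i, 0 < Dhat τ i i := by
  set C : ℝ := (1 / 2) * (frobNorm (S - (0 + pdiag S))) ^ 2 with hC
  have hC0 : 0 ≤ C := by positivity
  have hq : ∀ i, 0 ≤ C / S i i := fun i => div_nonneg hC0 (hdiag i).le
  have hs : 0 ≤ ∑ i, C / S i i := Finset.sum_nonneg fun i _ => hq i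
  refine ⟨1 + ∑ i, C / S i i, by linarith, fun τ hτ i => ?_⟩
  have hτ0 : 0 < τ := by linarith
  have hm := hmin τ hτ0
  rw [D_eq hm i]
  have h1 := hm.2.2 0 (pdiag S) Matrix.PosSemidef.zero (pdiag_idem S)
  have h2 : objF τ S 0 (pdiag S) = C := by
    simp only [objF, nucNorm_zero', hC]; ring
  have h3 : τ * nucNorm (Lhat τ) ≤ C := by
    rw [h2] at h1
    unfold objF at h1
    have := sq_nonneg (frobNorm (S - (Lhat τ + Dhat τ)))
    linarith
  have h4 : C / S i i ≤ ∑ i, C / S i i :=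
    Finset.single_le_sum (f := fun i => C / S i i) (fun i _ => hq i) (Finset.mem_univ i)
  have h5 : C / S i i < τ := by linarith
  rw [div_lt_iff₀ (hdiag i)] at h5
  have h6 : nucNorm (Lhat τ) < S i i := lt_of_mul_lt_mul_left (h3.trans_lt h5) hτ0.le
  linarith [entry_le_nucNorm (Lhat τ) i]
end

section
/- For every M ∈ S^p and τ > 0, the eigenvalue soft-thresholding D_τ^+(M) is the unique minimizer over X ∈ S^p_+ of the function X ↦ τ‖X‖_* + (1/2)‖X − M‖_F². -/
open Matrix MeasureTheory ProbabilityTheory BigOperators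

theorem aux_nucNorm_eq_trace {p : ℕ} (X : Matrix (Fin p) (Fin p) ℝ) (hX : X.PosSemidef) :
    nucNorm X = X.trace := by
  have hH := hX.isHermitian
  have hU : star (hH.eigenvectorUnitary : Matrix (Fin p) (Fin p) ℝ) *
      (hH.eigenvectorUnitary : Matrix (Fin p) (Fin p) ℝ) = 1 := by simp
  have hS : X = (hH.eigenvectorUnitary : Matrix (Fin p) (Fin p) ℝ) *
      diagonal hH.eigenvalues * star (hH.eigenvectorUnitary : Matrix (Fin p) (Fin p) ℝ) := by
    have h := hH.spectral_theorem
    rw [Unitary.conjStarAlgAut_apply] at h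
    exact h
  have h2 : Xᴴ * X = (hH.eigenvectorUnitary : Matrix (Fin p) (Fin p) ℝ) *
      (diagonal (fun i => hH.eigenvalues i ^ 2) *
        star (hH.eigenvectorUnitary : Matrix (Fin p) (Fin p) ℝ)) := by
    have hd : diagonal (fun i => hH.eigenvalues i ^ 2) =
        diagonal hH.eigenvalues * diagonal hH.eigenvalues := by
      rw [diagonal_mul_diagonal]; simp only [sq]
    rw [hH.eq, hd]
    generalize (hH.eigenvectorUnitary : Matrix (Fin p) (Fin p) ℝ) = U at *
    generalize diagonal hH.eigenvalues = D at *
    rw [hS]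
    calc U * D * star U * (U * D * star U) = U * D * (star U * U) * D * star U := by
          simp only [Matrix.mul_assoc]
      _ = _ := by rw [hU, Matrix.mul_one]; simp only [Matrix.mul_assoc]
  have hroots : (Xᴴ * X).charpoly.roots =
      Multiset.map (fun i => hH.eigenvalues i ^ 2) Finset.univ.val := by
    rw [h2, charpoly_mul_comm, Matrix.mul_assoc, hU, Matrix.mul_one, charpoly_diagonal,
      Polynomial.roots_prod]
    · simp only [Polynomial.roots_X_sub_C, Multiset.bind_singleton]
    · exact Finset.prod_ne_zero_iff.2 fun i _ => Polynomial.X_sub_C_ne_zero _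
  have h3 := (Matrix.posSemidef_conjTranspose_mul_self X).isHermitian.roots_charpoly_eq_eigenvalues
  rw [hroots] at h3
  have h4 := congrArg (fun m => (Multiset.map Real.sqrt m).sum) h3
  simp only [Multiset.map_map] at h4
  have h5 : ∑ i, Real.sqrt (hH.eigenvalues i ^ 2) = nucNorm X := h4
  rw [← h5, hH.trace_eq_sum_eigenvalues]
  refine Finset.sum_congr rfl fun i _ => ?_
  rw [Real.sqrt_sq (hX.eigenvalues_nonneg i)]
  rfl

theorem aux_frob_sq {p : ℕ} (A : Matrix (Fin p) (Fin p) ℝ) :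
    frobNorm A ^ 2 = ∑ i, ∑ j, (A i j) ^ 2 :=
  Real.sq_sqrt (Finset.sum_nonneg fun _ _ => Finset.sum_nonneg fun _ _ => sq_nonneg _)

theorem aux_frob_trace {p : ℕ} (A : Matrix (Fin p) (Fin p) ℝ) (hA : A.IsHermitian) :
    frobNorm A ^ 2 = (A * A).trace := by
  rw [aux_frob_sq]
  simp only [trace, diag_apply, mul_apply]
  refine Finset.sum_congr rfl fun i _ => Finset.sum_congr rfl fun j _ => ?_
  have := hA.apply i j
  simp only [star_trivial] at this
  rw [this, sq]

theorem aux_eq_of_frob {p : ℕ} (A B : Matrix (Fin p) (Fin p) ℝ) (h : frobNorm (A - B) ^ 2 ≤ 0) :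
    A = B := by
  rw [aux_frob_sq] at h
  have h0 := le_antisymm h
    (Finset.sum_nonneg fun _ _ => Finset.sum_nonneg fun _ _ => sq_nonneg _)
  ext i j
  have h1 := (Finset.sum_eq_zero_iff_of_nonneg (f := fun i => ∑ j, ((A - B) i j) ^ 2)
    (fun _ _ => Finset.sum_nonneg fun _ _ => sq_nonneg _)).1 h0 i (Finset.mem_univ _)
  have h2 := (Finset.sum_eq_zero_iff_of_nonneg (f := fun j => ((A - B) i j) ^ 2)
    (fun _ _ => sq_nonneg _)).1 h1 j (Finset.mem_univ _)
  have h3 := pow_eq_zero_iff (two_ne_zero) |>.1 h2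
  rw [Matrix.sub_apply] at h3
  linarith

theorem aux_identity {p : ℕ} (τ : ℝ) (X S M : Matrix (Fin p) (Fin p) ℝ) :
    τ * X.trace + (1 / 2) * ((X - M) * (X - M)).trace =
      τ * S.trace + (1 / 2) * ((S - M) * (S - M)).trace
        + (1 / 2) * ((X - S) * (X - S)).trace
        + (X * (S - M + τ • 1)).trace - (S * (S - M + τ • 1)).trace := by
  simp only [Matrix.sub_mul, Matrix.mul_sub, Matrix.mul_add, trace_sub, trace_add,
    Matrix.mul_smul, trace_smul, Matrix.mul_one, smul_eq_mul]
  rw [trace_mul_comm M X, trace_mul_comm M S, trace_mul_comm S X]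
  ring

theorem aux_main {p : ℕ} (M : Matrix (Fin p) (Fin p) ℝ)
    (hM : M.IsHermitian) (τ : ℝ) :
    (softThresh τ M).PosSemidef ∧
    ∀ X : Matrix (Fin p) (Fin p) ℝ, X.PosSemidef →
      τ * nucNorm (softThresh τ M) + (1 / 2) * (frobNorm (softThresh τ M - M)) ^ 2
        + (1 / 2) * (frobNorm (X - softThresh τ M)) ^ 2 ≤
        τ * nucNorm X + (1 / 2) * (frobNorm (X - M)) ^ 2 := by
  have hU : star (hM.eigenvectorUnitary : Matrix (Fin p) (Fin p) ℝ) *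
      (hM.eigenvectorUnitary : Matrix (Fin p) (Fin p) ℝ) = 1 := by simp
  have hU' : (hM.eigenvectorUnitary : Matrix (Fin p) (Fin p) ℝ) *
      star (hM.eigenvectorUnitary : Matrix (Fin p) (Fin p) ℝ) = 1 := by simp
  have hS : M = (hM.eigenvectorUnitary : Matrix (Fin p) (Fin p) ℝ) *
      diagonal hM.eigenvalues * star (hM.eigenvectorUnitary : Matrix (Fin p) (Fin p) ℝ) := by
    have h := hM.spectral_theorem
    rw [Unitary.conjStarAlgAut_apply] at h
    exact h
  have hT : softThresh τ M = (hM.eigenvectorUnitary : Matrix (Fin p) (Fin p) ℝ) *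
      diagonal (fun i => max (hM.eigenvalues i - τ) 0) *
      star (hM.eigenvectorUnitary : Matrix (Fin p) (Fin p) ℝ) := by
    unfold softThresh
    rw [dif_pos hM]
  generalize softThresh τ M = S at *
  generalize (hM.eigenvectorUnitary : Matrix (Fin p) (Fin p) ℝ) = U at *
  generalize hM.eigenvalues = l at *
  have hPS : S.PosSemidef := by
    rw [hT]
    exact (PosSemidef.diagonal (fun i => le_max_right _ _)).mul_mul_conjTranspose_same U
  have hG : S - M + τ • 1 = U * diagonal (fun i => max (l i - τ) 0 - l i + τ) * star U := by
    have hd : diagonal (fun i => max (l i - τ) 0 - l i + τ) =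
        diagonal (fun i => max (l i - τ) 0) - diagonal l + τ • (1 : Matrix (Fin p) (Fin p) ℝ) := by
      ext i j
      by_cases hij : i = j
      · subst hij; simp
      · simp [hij]
    rw [hd, hT]
    conv_lhs => rw [hS]
    simp only [Matrix.mul_add, Matrix.add_mul, Matrix.mul_sub, Matrix.sub_mul, Matrix.mul_smul,
      Matrix.smul_mul, Matrix.mul_one, hU']
  refine ⟨hPS, fun X hX => ?_⟩
  have hSG : (S * (S - M + τ • 1)).trace = 0 := by
    have : S * (S - M + τ • 1) = 0 := by
      rw [hG, hT]
      have : diagonal (fun i => max (l i - τ) 0) *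
          diagonal (fun i => max (l i - τ) 0 - l i + τ) = 0 := by
        rw [diagonal_mul_diagonal, ← diagonal_zero]
        congr 1
        funext i
        rcases le_total (l i - τ) 0 with h | h
        · simp [max_eq_right h]
        · simp [max_eq_left h]
      calc _ = U * (diagonal (fun i => max (l i - τ) 0) * ((star U * U) *
          diagonal (fun i => max (l i - τ) 0 - l i + τ))) * star U := by
            simp only [Matrix.mul_assoc]
        _ = 0 := by rw [hU, Matrix.one_mul, this]; simp
    rw [this, trace_zero]
  have hXG : 0 ≤ (X * (S - M + τ • 1)).trace := by
    rw [hG]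
    have hc : (X * (U * diagonal (fun i => max (l i - τ) 0 - l i + τ) * star U)).trace =
        ((Uᴴ * X * U) * diagonal (fun i => max (l i - τ) 0 - l i + τ)).trace := by
      rw [← Matrix.mul_assoc, trace_mul_comm]
      simp only [Matrix.mul_assoc]
      rfl
    rw [hc]
    refine Finset.sum_nonneg fun i _ => ?_
    rw [diag_apply, mul_diagonal]
    refine mul_nonneg (hX.conjTranspose_mul_mul_same U).diag_nonneg ?_
    have := le_max_left (l i - τ) 0
    linarith
  rw [aux_nucNorm_eq_trace X hX, aux_nucNorm_eq_trace S hPS,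
    aux_frob_trace _ (hPS.isHermitian.sub hM), aux_frob_trace _ (hX.isHermitian.sub hM),
    aux_frob_trace _ (hX.isHermitian.sub hPS.isHermitian)]
  have := aux_identity τ X S M
  linarith

/-- for `M ∈ S^p` and `τ > 0`, the eigenvalue soft-thresholding `D_τ⁺(M)` is
the unique minimizer over `X ∈ S^p₊` of `X ↦ τ‖X‖_* + (1/2)‖X − M‖_F²`. -/
theorem softThresh_is_unique_min (p : ℕ) (M : Matrix (Fin p) (Fin p) ℝ)
    (hM : M.IsHermitian) (τ : ℝ) (hτ : 0 < τ) :
    (softThresh τ M).PosSemidef ∧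
    (∀ X : Matrix (Fin p) (Fin p) ℝ, X.PosSemidef →
      τ * nucNorm (softThresh τ M) + (1 / 2) * (frobNorm (softThresh τ M - M)) ^ 2 ≤
        τ * nucNorm X + (1 / 2) * (frobNorm (X - M)) ^ 2) ∧
    (∀ X : Matrix (Fin p) (Fin p) ℝ, X.PosSemidef →
      (∀ Y : Matrix (Fin p) (Fin p) ℝ, Y.PosSemidef →
        τ * nucNorm X + (1 / 2) * (frobNorm (X - M)) ^ 2 ≤
          τ * nucNorm Y + (1 / 2) * (frobNorm (Y - M)) ^ 2) →
      X = softThresh τ M) := by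
  obtain ⟨h1, h2⟩ := aux_main M hM τ
  refine ⟨h1, fun X hX => ?_, fun X hX hmin => ?_⟩
  · have := h2 X hX
    have := sq_nonneg (frobNorm (X - softThresh τ M))
    linarith
  · refine aux_eq_of_frob _ _ ?_
    have := h2 X hX
    have := hmin _ h1
    linarith
end

section
/- Let Σ ∈ S^p and 0 < ψ < ‖poffdiag(Σ)‖_F². If (L̂, D̂) is a global minimizer of the constrained problem: minimize ‖L‖_* over L ∈ S^p_+ and diagonal D subject to ‖Σ − (L+D)‖_F² ≤ ψ, then the constraint is active: ‖Σ − (L̂ + D̂)‖_F² = ψ. -/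
open Matrix MeasureTheory ProbabilityTheory BigOperators

open scoped MatrixOrder Matrix.Norms.L2Operator in
theorem aux_nucNorm_eq_trace_s15 {p : ℕ} (L : Matrix (Fin p) (Fin p) ℝ) (hL : L.PosSemidef) :
    nucNorm L = L.trace := by
  have hH := (Matrix.posSemidef_conjTranspose_mul_self L).isHermitian
  have h1 : cfc Real.sqrt (Lᴴ * L) = L := by
    have h0 : (0 : Matrix (Fin p) (Fin p) ℝ) ≤ L := Matrix.nonneg_iff_posSemidef.mpr hL
    have hsa : IsSelfAdjoint L := hL.isHermitian
    have e : Lᴴ * L = L ^ 2 := by rw [hL.isHermitian.eq, sq]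
    rw [e, ← cfc_comp_pow Real.sqrt 2 L (by fun_prop)]
    conv_rhs => rw [← cfc_id' ℝ L]
    apply cfc_congr
    intro x hx
    exact Real.sqrt_sq (spectrum_nonneg_of_nonneg h0 hx)
  rw [hH.cfc_eq, Matrix.IsHermitian.cfc] at h1
  conv_rhs => rw [← h1]
  rw [Unitary.conjStarAlgAut_apply, Matrix.trace_mul_cycle]
  simp [nucNorm, singVals, Matrix.trace_diagonal]

theorem aux_frobNorm_sq {p : ℕ} (M : Matrix (Fin p) (Fin p) ℝ) :
    (frobNorm M) ^ 2 = ∑ i, ∑ j, (M i j) ^ 2 :=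
  Real.sq_sqrt (Finset.sum_nonneg fun _ _ => Finset.sum_nonneg fun _ _ => sq_nonneg _)

/-- if `0 < ψ < ‖poffdiag Σ‖_F²`, the constraint at a global minimizer of
the constrained problem is active: `‖Σ − (L̂ + D̂)‖_F² = ψ`. -/
theorem constrained_min_constraint_active (p : ℕ) (S : Matrix (Fin p) (Fin p) ℝ)
    (hS : S.IsHermitian) (ψ : ℝ) (hψ0 : 0 < ψ) (hψ1 : ψ < (frobNorm (poffdiag S)) ^ 2)
    (Lhat Dhat : Matrix (Fin p) (Fin p) ℝ)
    (hfeas : Lhat.PosSemidef ∧ Dhat = pdiag Dhat ∧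
      (frobNorm (S - (Lhat + Dhat))) ^ 2 ≤ ψ)
    (hopt : ∀ L D : Matrix (Fin p) (Fin p) ℝ, L.PosSemidef → D = pdiag D →
      (frobNorm (S - (L + D))) ^ 2 ≤ ψ → nucNorm Lhat ≤ nucNorm L) :
    (frobNorm (S - (Lhat + Dhat))) ^ 2 = ψ := by
  obtain ⟨hL, hD, hf⟩ := hfeas
  refine le_antisymm hf (not_lt.mp fun hlt => ?_)
  by_cases h0 : Lhat.trace = 0
  · have hz : Lhat = 0 := hL.trace_eq_zero_iff.mp h0
    have : (frobNorm (poffdiag S)) ^ 2 ≤ (frobNorm (S - (Lhat + Dhat))) ^ 2 := by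
      rw [aux_frobNorm_sq, aux_frobNorm_sq]
      refine Finset.sum_le_sum fun i _ => Finset.sum_le_sum fun j _ => ?_
      rw [hz, hD]
      by_cases hij : i = j
      · simp [poffdiag, pdiag, hij, sq_nonneg]
      · simp [poffdiag, pdiag, hij]
    linarith
  · have hpos : 0 < Lhat.trace := lt_of_le_of_ne hL.trace_nonneg (Ne.symm h0)
    let f : ℝ → ℝ := fun c => (frobNorm (S - (c • Lhat + Dhat))) ^ 2
    have hfc : Continuous f := by
      simp only [f, aux_frobNorm_sq, Matrix.sub_apply, Matrix.add_apply, Matrix.smul_apply,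
        smul_eq_mul]
      fun_prop
    have hf1 : f 1 < ψ := by simpa [f] using hlt
    have hev : ∀ᶠ c in nhds (1 : ℝ), f c < ψ ∧ 0 < c :=
      ((hfc.tendsto 1).eventually_lt_const hf1).and (lt_mem_nhds one_pos)
    obtain ⟨c, ⟨hc, hc0⟩, hc1⟩ :=
      ((hev.filter_mono nhdsWithin_le_nhds).and
        (self_mem_nhdsWithin : Set.Iio (1 : ℝ) ∈ nhdsWithin 1 (Set.Iio 1))).exists
    have hcL : (c • Lhat).PosSemidef := hL.smul hc0.le
    have := hopt (c • Lhat) Dhat hcL hD hc.le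
    rw [aux_nucNorm_eq_trace_s15 _ hL, aux_nucNorm_eq_trace_s15 _ hcL, Matrix.trace_smul,
      smul_eq_mul] at this
    have hc1' : c < 1 := hc1
    nlinarith
end

section
/- For every τ > 0 and all M₁, M₂ ∈ S^p, the eigenvalue soft-thresholding operator is nonexpansive in Frobenius norm: ‖D_τ^+(M₁) − D_τ^+(M₂)‖_F ≤ ‖M₁ − M₂‖_F. -/
open Matrix MeasureTheory ProbabilityTheory BigOperators

/-- Sum of squares as a trace. -/
theorem sumSq_eq_trace {p : ℕ} (M : Matrix (Fin p) (Fin p) ℝ) :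
    ∑ i, ∑ j, (M i j) ^ 2 = (M * Mᵀ).trace := by
  simp [Matrix.trace, Matrix.mul_apply, sq]

/-- Orthogonal invariance of the sum of squares. -/
theorem sumSq_invariant {p : ℕ} (U V M : Matrix (Fin p) (Fin p) ℝ)
    (hU : U * Uᵀ = 1) (hV : V * Vᵀ = 1) :
    ∑ i, ∑ j, ((Uᵀ * M * V) i j) ^ 2 = ∑ i, ∑ j, (M i j) ^ 2 := by
  rw [sumSq_eq_trace, sumSq_eq_trace]
  have e : (Uᵀ * M * V) * (Uᵀ * M * V)ᵀ = Uᵀ * (M * (V * Vᵀ) * Mᵀ * U) := by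
    simp only [Matrix.transpose_mul, Matrix.transpose_transpose, Matrix.mul_assoc]
  rw [e, hV, Matrix.trace_mul_comm, Matrix.mul_one, Matrix.mul_assoc _ U, hU, Matrix.mul_one]

/-- Key identity: difference of two spectral decompositions in mixed bases. -/
theorem sumSq_diff {p : ℕ} (U V : Matrix (Fin p) (Fin p) ℝ) (a b : Fin p → ℝ)
    (hU : U * Uᵀ = 1) (hV : V * Vᵀ = 1) :
    ∑ i, ∑ j, ((U * diagonal a * Uᵀ - V * diagonal b * Vᵀ) i j) ^ 2 =
      ∑ i, ∑ j, ((a i - b j) * (Uᵀ * V) i j) ^ 2 := by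
  have hU' : Uᵀ * U = 1 := mul_eq_one_comm.mp hU
  have hV' : Vᵀ * V = 1 := mul_eq_one_comm.mp hV
  rw [← sumSq_invariant U V _ hU hV]
  have e : Uᵀ * (U * diagonal a * Uᵀ - V * diagonal b * Vᵀ) * V =
      diagonal a * (Uᵀ * V) - (Uᵀ * V) * diagonal b := by
    have e1 : Uᵀ * (U * diagonal a * Uᵀ) * V = (Uᵀ * U) * diagonal a * (Uᵀ * V) := by
      simp only [Matrix.mul_assoc]
    have e2 : Uᵀ * (V * diagonal b * Vᵀ) * V = (Uᵀ * V) * diagonal b * (Vᵀ * V) := by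
      simp only [Matrix.mul_assoc]
    rw [Matrix.mul_sub, Matrix.sub_mul, e1, e2, hU', hV', Matrix.one_mul, Matrix.mul_one]
  rw [e]
  refine Finset.sum_congr rfl fun i _ => Finset.sum_congr rfl fun j _ => ?_
  rw [Matrix.sub_apply, Matrix.diagonal_mul, Matrix.mul_diagonal]
  ring

/-- the eigenvalue soft-thresholding operator is nonexpansive in
Frobenius norm on `S^p`. -/
theorem softThresh_nonexpansive (p : ℕ) (τ : ℝ) (hτ : 0 < τ)
    (M₁ M₂ : Matrix (Fin p) (Fin p) ℝ) (h₁ : M₁.IsHermitian) (h₂ : M₂.IsHermitian) :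
    frobNorm (softThresh τ M₁ - softThresh τ M₂) ≤ frobNorm (M₁ - M₂) := by
  have hU : (h₁.eigenvectorUnitary : Matrix (Fin p) (Fin p) ℝ) *
      (h₁.eigenvectorUnitary : Matrix (Fin p) (Fin p) ℝ)ᵀ = 1 :=
    Unitary.mul_star_self_of_mem h₁.eigenvectorUnitary.2
  have hV : (h₂.eigenvectorUnitary : Matrix (Fin p) (Fin p) ℝ) *
      (h₂.eigenvectorUnitary : Matrix (Fin p) (Fin p) ℝ)ᵀ = 1 :=
    Unitary.mul_star_self_of_mem h₂.eigenvectorUnitary.2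
  have s₁ : M₁ = (h₁.eigenvectorUnitary : Matrix (Fin p) (Fin p) ℝ) *
      diagonal h₁.eigenvalues * (h₁.eigenvectorUnitary : Matrix (Fin p) (Fin p) ℝ)ᵀ :=
    h₁.spectral_theorem
  have s₂ : M₂ = (h₂.eigenvectorUnitary : Matrix (Fin p) (Fin p) ℝ) *
      diagonal h₂.eigenvalues * (h₂.eigenvectorUnitary : Matrix (Fin p) (Fin p) ℝ)ᵀ :=
    h₂.spectral_theorem
  have t₁ : softThresh τ M₁ = (h₁.eigenvectorUnitary : Matrix (Fin p) (Fin p) ℝ) *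
      diagonal (fun i => max (h₁.eigenvalues i - τ) 0) *
      (h₁.eigenvectorUnitary : Matrix (Fin p) (Fin p) ℝ)ᵀ := by
    rw [softThresh, dif_pos h₁]; rfl
  have t₂ : softThresh τ M₂ = (h₂.eigenvectorUnitary : Matrix (Fin p) (Fin p) ℝ) *
      diagonal (fun i => max (h₂.eigenvalues i - τ) 0) *
      (h₂.eigenvectorUnitary : Matrix (Fin p) (Fin p) ℝ)ᵀ := by
    rw [softThresh, dif_pos h₂]; rfl
  have d := sumSq_diff _ _ h₁.eigenvalues h₂.eigenvalues hU hV
  rw [← s₁, ← s₂] at d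
  unfold frobNorm
  apply Real.sqrt_le_sqrt
  rw [t₁, t₂, sumSq_diff _ _ _ _ hU hV, d]
  refine Finset.sum_le_sum fun i _ => Finset.sum_le_sum fun j _ => ?_
  rw [mul_pow, mul_pow]
  refine mul_le_mul_of_nonneg_right ?_ (sq_nonneg _)
  rw [sq_le_sq]
  refine (abs_max_sub_max_le_abs _ _ _).trans (le_of_eq ?_)
  congr 1
  ring
end
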